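/- Let R, ε > 0, n ≥ 0, let K ⊆ Δ(S) be a simplicial complex, and let f: X → K be a map from a metric space X that has (R,ε) variation. If A ⊆ f⁻¹(K^(n)), then there exists a map r: B(A,R) → K^(n) that has (R,(8n+5)·ε) variation, agrees with f on A, and satisfies supp(r(x)) ⊆ supp(f(x)) for all x ∈ B(A,R). -/

import Mathlib

open Function Metric ENNReal

noncomputable section

/-- `ℓ¹(S)`: real-valued functions on `S` with finite `ℓ¹`-norm, with the `ℓ¹` metric. -/
abbrev ellOne (S : Type u) : Type u := lp (fun _ : S => ℝ) 1

/-- The full simplex `Δ(S) ⊆ ℓ¹(S)`. -/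
def fullSimplex (S : Type u) : Set (ellOne S) :=
  {p | (∀ s, 0 ≤ p s) ∧ (support (p : S → ℝ)).Finite ∧ ∑' s, p s = 1}

/-- The `n`-skeleton `Δ(S)^(n)` of the full simplex. -/
def skeleton (S : Type u) (n : ℕ) : Set (ellOne S) :=
  {p ∈ fullSimplex S | (support (p : S → ℝ)).encard ≤ n + 1}

/-- A simplicial complex on `S`: a subset of `Δ(S)` closed under passing to
points whose support is contained in the support of a member. -/
def IsSimplicialComplex {S : Type u} (K : Set (ellOne S)) : Prop :=
  K ⊆ fullSimplex S ∧
    ∀ p ∈ K, ∀ q ∈ fullSimplex S,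
      support (q : S → ℝ) ⊆ support (p : S → ℝ) → q ∈ K

/-- The star of a vertex `v` in `K`. -/
def star {S : Type u} (K : Set (ellOne S)) (v : S) : Set (ellOne S) :=
  {p ∈ K | 0 < p v}

/-- `f` is `(λ, C)`-Lipschitz. -/
def IsLipschitzLC {X Y : Type*} [MetricSpace X] [MetricSpace Y]
    (l C : ℝ) (f : X → Y) : Prop :=
  ∀ x y, dist (f x) (f y) ≤ l * dist x y + C

/-- A family of sets is uniformly bounded. -/
def UniformlyBounded {X : Type*} [MetricSpace X] {ι : Type*} (U : ι → Set X) : Prop :=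
  ∃ M : ℝ, ∀ i, ∀ x ∈ U i, ∀ y ∈ U i, dist x y ≤ M

/-- `U` is a cover of the whole space. -/
def IsCover {X : Type*} {ι : Type*} (U : ι → Set X) : Prop := ∀ x, ∃ i, x ∈ U i

/-- The Lebesgue number `inf_x sup_i dist(x, X∖Uᵢ)` of a family, as a value in `ℝ≥0∞`. -/
def lebesgue {X : Type*} [MetricSpace X] {ι : Type*} (U : ι → Set X) : ℝ≥0∞ :=
  ⨅ x : X, ⨆ i, EMetric.infEdist x (U i)ᶜ

/-- The multiplicity of `U` is at most `m`. -/
def MultiplicityLE {X : Type*} [MetricSpace X] {ι : Type*} (U : ι → Set X) (m : ℕ) : Prop :=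
  ∀ x : X, {i | 0 < Metric.infDist x ((U i)ᶜ)}.encard ≤ m

/-- `f : X → K` is a `δ`-partition of unity. -/
def IsDeltaPartitionOfUnity {X : Type*} [MetricSpace X] {S : Type u}
    (δ : ℝ) (K : Set (ellOne S)) (f : X → ellOne S) : Prop :=
  (∀ x, f x ∈ K) ∧ IsLipschitzLC δ δ f ∧
    UniformlyBounded (fun v : S => f ⁻¹' star K v) ∧
    ENNReal.ofReal (1 / δ) ≤ lebesgue (fun v : S => f ⁻¹' star K v)

/-- `X` is large scale paracompact. -/
def LSParacompact (X : Type u) [MetricSpace X] : Prop :=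
  ∀ (ι : Type u) (U : ι → Set X), IsCover U → UniformlyBounded U →
    ∀ l C : ℝ, 0 < l → 0 < C →
      ∃ (S : Type u) (K : Set (ellOne S)) (f : X → ellOne S),
        IsSimplicialComplex K ∧ (∀ x, f x ∈ K) ∧ IsLipschitzLC l C f ∧
        UniformlyBounded (fun v : S => f ⁻¹' star K v) ∧
        ∀ i, ∃ v : S, U i ⊆ f ⁻¹' star K v

/-- `X` has asymptotic dimension at most `n`. -/
def AsdimLE (X : Type u) [MetricSpace X] (n : ℕ) : Prop :=
  ∀ R : ℝ, 0 < R → ∃ (ι : Type u) (U : ι → Set X),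
    IsCover U ∧ UniformlyBounded U ∧ MultiplicityLE U (n + 1) ∧
    ENNReal.ofReal R ≤ lebesgue U

/-- `X` has Property A. -/
def PropertyA (X : Type u) [MetricSpace X] : Prop :=
  ∀ R ε : ℝ, 0 < R → 0 < ε →
    ∃ (M : ℝ) (S : Type u) (φ : S → X → ℝ), 0 < M ∧
      (∀ s x, 0 ≤ φ s x ∧ φ s x ≤ 1) ∧
      (∀ x, (support fun s => φ s x).Finite) ∧
      (∀ x, ∑' s, φ s x = 1) ∧
      (∀ x y, dist x y ≤ R → ∑' s, |φ s x - φ s y| < ε) ∧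
      (∀ s, ∀ x ∈ support (φ s), ∀ y ∈ support (φ s), dist x y ≤ M)

/-- `f` has `(R, ε)` variation. -/
def HasVariation {X Y : Type*} [MetricSpace X] [MetricSpace Y] (R ε : ℝ) (f : X → Y) : Prop :=
  ∀ x y, dist x y ≤ R → dist (f x) (f y) < ε

/-- `g` is a coarse embedding. -/
def CoarseEmbedding {X Y : Type*} [MetricSpace X] [MetricSpace Y] (g : X → Y) : Prop :=
  ∃ ρminus ρplus : ℝ → ℝ, Monotone ρminus ∧ Monotone ρplus ∧
    Filter.Tendsto ρminus Filter.atTop Filter.atTop ∧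
    ∀ x y, ρminus (dist x y) ≤ dist (g x) (g y) ∧ dist (g x) (g y) ≤ ρplus (dist x y)

/-- `X` has bounded geometry: balls of any fixed radius have uniformly bounded cardinality. -/
def BoundedGeometry (X : Type*) [MetricSpace X] : Prop :=
  ∀ r : ℝ, 0 < r → ∃ N : ℕ, ∀ x : X, (Metric.ball x r).encard ≤ N

/-- The `ℓ¹`-norm of a nonnegative element is the sum of its values. -/
theorem norm_eq_tsum_of_nonneg {S : Type*} (w : ellOne S) (hw : ∀ s, 0 ≤ w s) :
    ‖w‖ = ∑' s, w s := by
  rw [lp.norm_eq_tsum_rpow (by simp)]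
  simp [Real.norm_of_nonneg (hw _)]

/-- An element of `ℓ¹(S)` has summable values. -/
theorem summable_ellOne {S : Type*} (w : ellOne S) : Summable fun s => w s :=
  (lp.memℓp w).summable_of_one

/-- The support of a point of the full simplex is nonempty. -/
theorem support_nonempty_of_mem_fullSimplex {S : Type*} {p : ellOne S}
    (hp : p ∈ fullSimplex S) : (support (p : S → ℝ)).Nonempty := by
  rw [support_nonempty_iff]
  intro h
  have := hp.2.2
  simp [h] at this

/-- The part of `p` lying outside a set `T` can be moved to a vertex `v` in the support of `p`,
displacing `p` by at most twice the mass moved. -/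
theorem exists_mem_fullSimplex_dist_le {S : Type*} {p : ellOne S} (hp : p ∈ fullSimplex S)
    (T : Set S) (q : ellOne S) (hq : support (q : S → ℝ) ⊆ T) {v : S}
    (hv : v ∈ support (p : S → ℝ)) :
    ∃ r ∈ fullSimplex S, support (r : S → ℝ) ⊆ support (p : S → ℝ) ∧
      support (r : S → ℝ) ⊆ insert v (support (p : S → ℝ) ∩ T) ∧
      dist r p ≤ 2 * dist p q := by
  classical
  have hmem : Memℓp (Tᶜ.indicator (p : S → ℝ)) 1 := by
    have h := Summable.of_nonneg_of_le (fun _ => norm_nonneg _)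
      (fun s => norm_indicator_le_norm_self (s := Tᶜ) (p : S → ℝ) s) (summable_ellOne p).norm
    exact memℓp_gen (by simpa using h)
  let w : ellOne S := ⟨Tᶜ.indicator (p : S → ℝ), hmem⟩
  have hw : ∀ s, w s = Tᶜ.indicator (p : S → ℝ) s := fun _ => rfl
  have hw0 : ∀ s, 0 ≤ w s := fun s => Set.indicator_nonneg (fun s _ => hp.1 s) s
  have hwle : ∀ s, w s ≤ p s := fun s => Set.indicator_le_self' (fun s _ => hp.1 s) s
  have hnorm : ‖w‖ ≤ dist p q := by
    rw [dist_eq_norm]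
    refine lp.norm_mono one_ne_zero fun s => ?_
    by_cases hs : s ∈ T
    · simp [hw, hs]
    · have : q s = 0 := notMem_support.1 fun h => hs (hq h)
      simp [hw, hs, this]
  let r : ellOne S := p - w + lp.single 1 v ‖w‖
  have hr : ∀ s, r s = p s - w s + (Pi.single v ‖w‖ : S → ℝ) s := fun _ => rfl
  have hsub : support (r : S → ℝ) ⊆ insert v (support (p : S → ℝ) ∩ T) := by
    intro s hs
    by_contra h
    simp only [Set.mem_insert_iff, Set.mem_inter_iff, not_or, mem_support, not_and] at h
    refine hs ?_
    rw [hr, Pi.single_eq_of_ne h.1, hw]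
    by_cases hsT : s ∈ T
    · have : p s = 0 := by
        by_contra h0
        exact h.2 h0 hsT
      simp [hsT, this]
    · simp [hsT]
  have hsupp : support (r : S → ℝ) ⊆ support (p : S → ℝ) :=
    hsub.trans (Set.insert_subset hv Set.inter_subset_left)
  refine ⟨r, ⟨fun s => ?_, hp.2.1.subset hsupp, ?_⟩, hsupp, hsub, ?_⟩
  · rw [hr]
    have : 0 ≤ (Pi.single v ‖w‖ : S → ℝ) s := by
      rw [Pi.single_apply]
      positivity
    linarith [hwle s]
  · have h := (((summable_ellOne p).hasSum.sub (summable_ellOne w).hasSum).add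
      (hasSum_pi_single v ‖w‖)).tsum_eq
    rw [hp.2.2, ← norm_eq_tsum_of_nonneg w hw0, sub_add_cancel] at h
    exact h
  · have hrp : r - p = lp.single 1 v ‖w‖ - w := by
      simp only [r]
      abel
    rw [dist_eq_norm, hrp]
    have h1 := norm_sub_le (lp.single (E := fun _ : S => ℝ) 1 v ‖w‖) w
    rw [lp.norm_single one_pos, norm_norm] at h1
    linarith

/-- A point `p` of the full simplex can be moved into the `n`-skeleton, without enlarging its
support, by at most twice its distance to any given point of the `n`-skeleton. -/
theorem exists_mem_skeleton_dist_le {S : Type*} {n : ℕ} {p q : ellOne S}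
    (hp : p ∈ fullSimplex S) (hq : q ∈ skeleton S n) :
    ∃ r ∈ skeleton S n, support (r : S → ℝ) ⊆ support (p : S → ℝ) ∧
      dist r p ≤ 2 * dist p q := by
  obtain ⟨v, hv, hcard⟩ : ∃ v ∈ support (p : S → ℝ),
      (insert v (support (p : S → ℝ) ∩ support (q : S → ℝ))).encard ≤ n + 1 := by
    rcases (support (p : S → ℝ) ∩ support (q : S → ℝ)).eq_empty_or_nonempty with h | ⟨v, hv⟩
    · obtain ⟨v, hv⟩ := support_nonempty_of_mem_fullSimplex hp
      exact ⟨v, hv, by simp [h]⟩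
    · refine ⟨v, hv.1, ?_⟩
      rw [Set.insert_eq_of_mem hv]
      exact (Set.encard_le_encard Set.inter_subset_right).trans hq.2
  obtain ⟨r, hr, hrp, hrv, hd⟩ := exists_mem_fullSimplex_dist_le hp _ q subset_rfl hv
  exact ⟨r, ⟨hr, (Set.encard_le_encard hrv).trans hcard⟩, hrp, hd⟩

/-- a map `f : X → K` with `(R, ε)` variation sending `A` into `K^(n)`
extends over `B(A, R)` to a map `r` into `K^(n)` with `(R, (8n+5)·ε)` variation that
agrees with `f` on `A` and satisfies `supp (r x) ⊆ supp (f x)`. -/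
theorem extend_over_neighborhood {X : Type*} [MetricSpace X] {S : Type u}
    (R ε : ℝ) (hR : 0 < R) (hε : 0 < ε) (n : ℕ)
    (K : Set (ellOne S)) (hK : IsSimplicialComplex K)
    (f : X → ellOne S) (hfK : ∀ x, f x ∈ K) (hvar : HasVariation R ε f)
    (A : Set X) (hA : ∀ a ∈ A, f a ∈ K ∩ skeleton S n) :
    ∃ r : (⋃ a ∈ A, Metric.ball a R : Set X) → ellOne S,
      (∀ x, r x ∈ K ∩ skeleton S n) ∧
      HasVariation R ((8 * n + 5) * ε) r ∧
      (∀ x : (⋃ a ∈ A, Metric.ball a R : Set X), (x : X) ∈ A → r x = f (x : X)) ∧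
      (∀ x : (⋃ a ∈ A, Metric.ball a R : Set X),
        support ((r x : S → ℝ)) ⊆ support ((f (x : X) : S → ℝ))) := by
  have key : ∀ x : (⋃ a ∈ A, Metric.ball a R : Set X), ∃ r ∈ skeleton S n,
      support (r : S → ℝ) ⊆ support (f (x : X) : S → ℝ) ∧ dist r (f x) < 2 * ε ∧
      ((x : X) ∈ A → r = f x) := by
    rintro ⟨x, hx⟩
    by_cases hxA : x ∈ A
    · exact ⟨f x, (hA x hxA).2, subset_rfl, by simpa using hε, fun _ => rfl⟩
    · obtain ⟨a, ha, hxa⟩ := Set.mem_iUnion₂.1 hx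
      obtain ⟨r, hr, hsupp, hd⟩ := exists_mem_skeleton_dist_le (hK.1 (hfK x)) (hA a ha).2
      have := hvar x a (Metric.mem_ball.1 hxa).le
      exact ⟨r, hr, hsupp, by dsimp only; linarith, fun h => absurd h hxA⟩
  choose r hr hsupp hd hrA using key
  refine ⟨r, fun x => ⟨hK.2 _ (hfK x) _ (hr x).1 (hsupp x), hr x⟩, fun x y hxy => ?_, hrA, hsupp⟩
  have h1 := dist_triangle4 (r x) (f x) (f y) (r y)
  have h2 := hd y
  rw [dist_comm] at h2
  have h3 : 0 ≤ (n : ℝ) * ε := by positivity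
  linarith [hd x, hvar x y hxy]

end
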